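/- There exists a 2-(24,4,1) packing with 42 blocks whose leave is a vertex-disjoint union of four cycles of length 6, covering all 24 points (leave type 6^4). -/

import Mathlib

/-!
Identify the 24 points with the two-coloured arcs of the complete digraph on four vertices: a point
is an ordered pair `ij` with `i ≠ j` together with a colour, and the second colour is marked by a
prime. The six points with tail `i` form a hexagon in which two of them are adjacent when they
differ both in head and in colour; these four hexagons are the leave. The symmetric group `S₄`
permutes the points by acting on the vertices.

Consider the pairs of points up to `S₄`. The 6 blocks `{ij, ji, ij', ji'}` use up all pairs on the
same two vertices. If `{i, j}` and `{k, l}` are complementary, the monochromatic pairs inside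
`{i, j} × {k, l}` form a block, and there are 12 such blocks. Apart from the hexagon edges, six
orbits of 24 pairs remain. Each of them is represented exactly once by the six pairs in
`{01, 12, 23', 31'}`, so that the 24 translates of this block complete the packing.
-/

/-- A 2-(24,4,1) packing: a collection of 4-element blocks on 24 points such that
every pair of distinct points lies in at most one block. -/
def IsPacking (B : Finset (Finset (Fin 24))) : Prop :=
  (∀ b ∈ B, b.card = 4) ∧
  ∀ p q : Fin 24, p ≠ q → ∀ b₁ ∈ B, ∀ b₂ ∈ B,
    p ∈ b₁ → q ∈ b₁ → p ∈ b₂ → q ∈ b₂ → b₁ = b₂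

/-- Adjacency in the leave of a packing: the pair of distinct points is covered by no block. -/
def LeaveAdj (B : Finset (Finset (Fin 24))) (p q : Fin 24) : Prop :=
  p ≠ q ∧ ∀ b ∈ B, ¬ (p ∈ b ∧ q ∈ b)

/-- The leave of the packing `B` is a vertex-disjoint union of cycles whose lengths are
given by the list `L`, covering all 24 points. -/
def LeaveIsCycleType (B : Finset (Finset (Fin 24))) (L : List ℕ) : Prop :=
  ∃ f : (i : Fin L.length) → ZMod (L.get i) → Fin 24,
    Function.Bijective (fun x : Σ i : Fin L.length, ZMod (L.get i) => f x.1 x.2) ∧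
    ∀ p q : Fin 24, LeaveAdj B p q ↔
      ∃ i k, (p = f i k ∧ q = f i (k + 1)) ∨ (q = f i k ∧ p = f i (k + 1))

open Finset Equiv
open scoped Pointwise

section Development

variable {G ι α : Type*} [Group G] [Fintype G] [Fintype ι]

variable (G) in
/-- The development of a family `b` of base blocks under a finite group `G`: the set of all
translates of the base blocks. -/
def development [MulAction G α] [DecidableEq α] (b : ι → Finset α) : Finset (Finset α) :=
  univ.image fun x : G × ι => x.1 • b x.2

theorem mem_development [MulAction G α] [DecidableEq α] {b : ι → Finset α} {s : Finset α} :
    s ∈ development G b ↔ ∃ (g : G) (i : ι), g • b i = s := by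
  simp only [development, mem_image, mem_univ, true_and, Prod.exists]

variable [MulAction G (Fin 24)] {b : ι → Finset (Fin 24)}

theorem isPacking_development (hcard : ∀ i, #(b i) = 4)
    (hb : ∀ i j, ∀ p ∈ b i, ∀ q ∈ b i, p ≠ q → ∀ g : G,
      g • p ∈ b j → g • q ∈ b j → g • b i = b j) :
    IsPacking (development G b) := by
  refine ⟨fun s hs => ?_, fun p q hpq s hs t ht hps hqs hpt hqt => ?_⟩
  · obtain ⟨g, i, rfl⟩ := mem_development.mp hs
    rw [card_smul_finset, hcard]
  · obtain ⟨g, i, rfl⟩ := mem_development.mp hs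
    obtain ⟨k, j, rfl⟩ := mem_development.mp ht
    rw [← inv_smul_mem_iff] at hps hqs hpt hqt
    have htranslate : (k⁻¹ * g) • b i = b j :=
      hb i j _ hps _ hqs (by simpa using hpq) (k⁻¹ * g) (by simpa [mul_smul] using hpt)
        (by simpa [mul_smul] using hqt)
    rw [← htranslate, mul_smul, smul_inv_smul]

theorem leaveAdj_development_iff {p q : Fin 24} :
    LeaveAdj (development G b) p q ↔ p ≠ q ∧ ∀ (i : ι) (g : G), g • p ∈ b i → g • q ∉ b i := by
  refine and_congr_right fun _ => ⟨fun h i g hp hq => ?_, fun h s hs ⟨hp, hq⟩ => ?_⟩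
  · exact h _ (mem_development.mpr ⟨g⁻¹, i, rfl⟩)
      ⟨mem_inv_smul_finset_iff.mpr hp, mem_inv_smul_finset_iff.mpr hq⟩
  · obtain ⟨g, i, rfl⟩ := mem_development.mp hs
    exact h i g⁻¹ (inv_smul_mem_iff.mpr hp) (inv_smul_mem_iff.mpr hq)

theorem leaveAdj_development_smul_iff (g : G) {p q : Fin 24} :
    LeaveAdj (development G b) (g • p) (g • q) ↔ LeaveAdj (development G b) p q := by
  simp only [leaveAdj_development_iff, smul_smul, ne_eq, smul_left_cancel_iff]
  exact and_congr_right fun _ => forall_congr' fun i =>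
    (Equiv.mulRight g).forall_congr fun _ => Iff.rfl

end Development

theorem leaveIsCycleType_of_forall_get_eq {B : Finset (Finset (Fin 24))} {L : List ℕ} {n : ℕ}
    (hL : ∀ i, L.get i = n) (e : Fin L.length × ZMod n ≃ Fin 24)
    (he : ∀ p q, LeaveAdj B p q ↔
      ∃ i k, (p = e (i, k) ∧ q = e (i, k + 1)) ∨ (q = e (i, k) ∧ p = e (i, k + 1))) :
    LeaveIsCycleType B L := by
  unfold LeaveIsCycleType
  generalize L.get = lengths at hL ⊢
  obtain rfl : lengths = fun _ => n := funext hL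
  exact ⟨fun i k => e (i, k), ((sigmaEquivProd _ _).trans e).bijective, he⟩

/-- The numbering of the points by the vertices of four hexagons: `(i, k)` is vertex `k` of the
hexagon `i` and has number `6 * i + k`. -/
def hexagonVertex : Fin 4 × ZMod 6 ≃ Fin 24 :=
  finProdFinEquiv (m := 4) (n := 6)

/-- The tail of a point regarded as a coloured arc, which is the index of its hexagon. -/
def arcTail (p : Fin 24) : Fin 4 :=
  (hexagonVertex.symm p).1

/-- The head of a point regarded as a coloured arc: on the hexagon `i`, the three vertices
other than `i` occur cyclically as heads, so that the head determines the position modulo 3. -/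
def arcHead (p : Fin 24) : Fin 4 :=
  arcTail p + 1 + Fin.ofNat 4 ((hexagonVertex.symm p).2.val % 3)

/-- The colour of a point regarded as a coloured arc: the colours alternate on each hexagon, so
that the colour determines the position modulo 2. -/
def arcColour (p : Fin 24) : Fin 2 :=
  Fin.ofNat 2 (hexagonVertex.symm p).2.val

/-- The point that stands for the arc from `i` to `j` of colour `c`, for `i ≠ j`. Its position on
the hexagon `i` is found by the Chinese remainder theorem modulo 3 and 2. -/
def arc (i j : Fin 4) (c : Fin 2) : Fin 24 :=
  hexagonVertex (i, Fin.ofNat 6 (4 * (j - i - 1).val + 3 * c.val))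

theorem arcTail_ne_arcHead (p : Fin 24) : arcTail p ≠ arcHead p := by
  decide +revert

theorem arc_arcTail_arcHead_arcColour (p : Fin 24) :
    arc (arcTail p) (arcHead p) (arcColour p) = p := by
  decide +revert

theorem arcTail_arc (i j : Fin 4) (c : Fin 2) : arcTail (arc i j c) = i := by
  decide +revert

theorem arcHead_arc {i j : Fin 4} (hij : i ≠ j) (c : Fin 2) : arcHead (arc i j c) = j := by
  revert i j c
  decide

theorem arcColour_arc (i j : Fin 4) (c : Fin 2) : arcColour (arc i j c) = c := by
  decide +revert

theorem hexagon_adj_iff (p q : Fin 24) :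
    (arcTail p = arcTail q ∧ arcHead p ≠ arcHead q ∧ arcColour p ≠ arcColour q) ↔
      ∃ i k, (p = hexagonVertex (i, k) ∧ q = hexagonVertex (i, k + 1)) ∨
        (q = hexagonVertex (i, k) ∧ p = hexagonVertex (i, k + 1)) := by
  decide +kernel +revert

/-- The symmetric group `S₄` acts on coloured arcs by permuting the vertices and keeps colours. -/
instance arcSMul : SMul (Perm (Fin 4)) (Fin 24) where
  smul σ p := arc (σ (arcTail p)) (σ (arcHead p)) (arcColour p)

theorem smul_eq_arc (σ : Perm (Fin 4)) (p : Fin 24) :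
    σ • p = arc (σ (arcTail p)) (σ (arcHead p)) (arcColour p) :=
  rfl

theorem arcTail_smul (σ : Perm (Fin 4)) (p : Fin 24) : arcTail (σ • p) = σ (arcTail p) :=
  arcTail_arc ..

theorem arcHead_smul (σ : Perm (Fin 4)) (p : Fin 24) : arcHead (σ • p) = σ (arcHead p) :=
  arcHead_arc (σ.injective.ne (arcTail_ne_arcHead p)) _

theorem arcColour_smul (σ : Perm (Fin 4)) (p : Fin 24) : arcColour (σ • p) = arcColour p :=
  arcColour_arc ..

instance arcMulAction : MulAction (Perm (Fin 4)) (Fin 24) where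
  one_smul := arc_arcTail_arcHead_arcColour
  mul_smul σ τ p := by
    rw [smul_eq_arc (σ * τ), smul_eq_arc σ, arcTail_smul, arcHead_smul, arcColour_smul,
      Perm.mul_apply, Perm.mul_apply]

theorem exists_smul_eq_arc {i j : Fin 4} (hij : i ≠ j) (p : Fin 24) :
    ∃ σ : Perm (Fin 4), σ • p = arc i j (arcColour p) := by
  obtain ⟨σ, htail, hhead⟩ := MulAction.is_two_pretransitive_iff.mp
    (Perm.isMultiplyPretransitive (Fin 4) 2) (arcTail_ne_arcHead p) hij
  exact ⟨σ, by rw [smul_eq_arc, ← htail, ← hhead, Perm.smul_def, Perm.smul_def]⟩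

/-- Representatives of the `S₄`-orbits of blocks; the orbits have lengths 6, 6, 6 and 24. -/
def baseBlock : Fin 4 → Finset (Fin 24) :=
  ![{arc 0 1 0, arc 1 0 0, arc 0 1 1, arc 1 0 1},
    {arc 0 2 0, arc 0 3 0, arc 1 2 0, arc 1 3 0},
    {arc 0 2 1, arc 0 3 1, arc 1 2 1, arc 1 3 1},
    {arc 0 1 0, arc 1 2 0, arc 2 3 1, arc 3 1 1}]

theorem card_baseBlock (i : Fin 4) : #(baseBlock i) = 4 := by
  decide +revert

theorem smul_baseBlock_eq : ∀ i j, ∀ p ∈ baseBlock i, ∀ q ∈ baseBlock i, p ≠ q →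
    ∀ σ : Perm (Fin 4), σ • p ∈ baseBlock j → σ • q ∈ baseBlock j →
      σ • baseBlock i = baseBlock j := by
  decide +kernel

theorem card_development_baseBlock : #(development (Perm (Fin 4)) baseBlock) = 42 := by
  decide +kernel

theorem leaveAdj_development_baseBlock_arc_zero_one_iff (c : Fin 2) (q : Fin 24) :
    LeaveAdj (development (Perm (Fin 4)) baseBlock) (arc 0 1 c) q ↔
      0 = arcTail q ∧ 1 ≠ arcHead q ∧ c ≠ arcColour q := by
  rw [leaveAdj_development_iff]
  decide +kernel +revert

theorem leaveAdj_development_baseBlock_iff (p q : Fin 24) :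
    LeaveAdj (development (Perm (Fin 4)) baseBlock) p q ↔
      arcTail p = arcTail q ∧ arcHead p ≠ arcHead q ∧ arcColour p ≠ arcColour q := by
  obtain ⟨σ, hσ⟩ := exists_smul_eq_arc zero_ne_one p
  have htail : σ (arcTail p) = 0 := by rw [← arcTail_smul, hσ, arcTail_arc]
  have hhead : σ (arcHead p) = 1 := by rw [← arcHead_smul, hσ, arcHead_arc zero_ne_one]
  rw [← leaveAdj_development_smul_iff σ, hσ, leaveAdj_development_baseBlock_arc_zero_one_iff,
    arcTail_smul, arcHead_smul, arcColour_smul, ← htail, ← hhead,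
    σ.apply_eq_iff_eq, σ.injective.ne_iff]

/-- There is a 2-(24,4,1) packing with 42 blocks whose leave is a vertex-disjoint
union of cycles of lengths [6, 6, 6, 6], covering all 24 points. -/
theorem exists_max_packing_with_leave_type :
    ∃ B : Finset (Finset (Fin 24)), IsPacking B ∧ B.card = 42 ∧
      LeaveIsCycleType B [6, 6, 6, 6] := by
  refine ⟨development (Perm (Fin 4)) baseBlock,
    isPacking_development card_baseBlock smul_baseBlock_eq, card_development_baseBlock,
    leaveIsCycleType_of_forall_get_eq (n := 6) (by decide) hexagonVertex fun p q => ?_⟩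
  exact (leaveAdj_development_baseBlock_iff p q).trans (hexagon_adj_iff p q)
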